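/- arXiv:1405.0356 — 2 statements merged into one kernel-verified Lean document; each statement's English description precedes it below -/
import Mathlib

section
/- Define μ̂(ζ) := ζ^{−2}·((ζ/2)·(e^ζ + 1)/(e^ζ − 1) − 1) for ζ ∈ ℂ with e^ζ ≠ 1. Then for every θ ∈ (−π/2, π/2) and every z ∈ ℂ with Re(z·e^{iθ}) > 0, the integral e^{iθ}∫₀^{+∞} e^{−z·ξe^{iθ}} μ̂(ξe^{iθ}) dξ converges and Γ(z) = √(2π)·exp((z − 1/2)·Log z − z)·exp(e^{iθ}∫₀^{+∞} e^{−z·ξe^{iθ}} μ̂(ξe^{iθ}) dξ), where Log is the principal branch of the logarithm and Γ is the complex Gamma function. -/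
open MeasureTheory

/-- The Borel transform of the Stirling series:
`μ̂(ζ) = ζ^{-2}·((ζ/2)·(e^ζ+1)/(e^ζ-1) − 1)`. -/
noncomputable def muHat (ζ : ℂ) : ℂ :=
  ζ ^ (-2 : ℤ) * (ζ / 2 * ((Complex.exp ζ + 1) / (Complex.exp ζ - 1)) - 1)

/-!
For `Re ζ > 0` the product `μ̂(ζ) (1 - e^{-ζ})` equals `∫₀¹ (1/2 - t) e^{-tζ} dt`. This makes `μ̂`
bounded on every ray in the right half-plane, and taking Laplace transforms along such a ray turns
it into a difference equation for the transform `L`: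
`L(z) - L(z + 1) = ∫₀¹ (1/2 - t) / (z + t) dt = (z + 1/2) (log (z + 1) - log z) - 1`.
Hence `F(z) = √(2π) exp((z - 1/2) log z - z) exp(L(z))` satisfies `F(z + 1) = z F(z)`. As `L(z + n)`
tends to `0`, Stirling's formula gives `F(z + n + 1) ~ n ^ z n!`, and Euler's limit formula
identifies `F` with `Γ`.
-/

section

open Complex Filter Topology
open scoped Nat

section RayLaplace

variable {f g : ℂ → ℂ} {w z : ℂ} {C : ℝ}

/-- The Laplace transform of `f` along the ray `w · (0, ∞)`, as a function of `z`, namely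
`∫ e^{-zζ} f(ζ) dζ` with the parametrization `ζ = ξ w`. The direction `w` need not be a unit. -/
noncomputable def rayLaplace (f : ℂ → ℂ) (w z : ℂ) : ℂ :=
  w * ∫ ξ in Set.Ioi (0 : ℝ), exp (-z * (ξ * w)) * f (ξ * w)

theorem norm_exp_neg_mul_ofReal_mul (z w : ℂ) (ξ : ℝ) :
    ‖exp (-z * (ξ * w))‖ = Real.exp (-(z * w).re * ξ) := by
  rw [norm_exp, show -z * (ξ * w) = -(z * w) * ξ by ring, re_mul_ofReal, neg_re]

theorem integrableOn_exp_neg_mul_ofReal_mul (hz : 0 < (z * w).re) :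
    IntegrableOn (fun ξ : ℝ => exp (-z * (ξ * w))) (Set.Ioi 0) := by
  have h : (-(z * w)).re < 0 := by simpa only [neg_re, neg_lt_zero] using hz
  refine (integrableOn_exp_mul_complex_Ioi h 0).congr_fun (fun ξ _ => ?_) measurableSet_Ioi
  ring_nf

theorem integrableOn_exp_mul_of_bounded_on_ray (hz : 0 < (z * w).re)
    (hf : AEStronglyMeasurable (fun ξ : ℝ => f (ξ * w)) (volume.restrict (Set.Ioi 0)))
    (hC : ∀ ξ : ℝ, 0 < ξ → ‖f (ξ * w)‖ ≤ C) :
    IntegrableOn (fun ξ : ℝ => exp (-z * (ξ * w)) * f (ξ * w)) (Set.Ioi 0) :=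
  (integrableOn_exp_neg_mul_ofReal_mul hz).mul_bdd (c := C) hf
    (ae_restrict_of_forall_mem measurableSet_Ioi hC)

theorem norm_rayLaplace_le (hz : 0 < (z * w).re) (hC : ∀ ξ : ℝ, 0 < ξ → ‖f (ξ * w)‖ ≤ C) :
    ‖rayLaplace f w z‖ ≤ ‖w‖ * C / (z * w).re := by
  have hbound : ∀ ξ ∈ Set.Ioi (0 : ℝ),
      ‖exp (-z * (ξ * w)) * f (ξ * w)‖ ≤ Real.exp (-(z * w).re * ξ) * C := fun ξ hξ => by
    rw [norm_mul, norm_exp_neg_mul_ofReal_mul]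
    gcongr
    exact hC ξ hξ
  have hint := norm_integral_le_of_norm_le
    ((integrableOn_exp_mul_Ioi (neg_lt_zero.mpr hz) 0).mul_const C)
    (ae_restrict_of_forall_mem measurableSet_Ioi hbound)
  rw [integral_mul_const, integral_exp_mul_Ioi (neg_lt_zero.mpr hz), mul_zero, Real.exp_zero,
    neg_div_neg_eq, one_div_mul_eq_div] at hint
  rw [rayLaplace, norm_mul, mul_div_assoc]
  gcongr

theorem tendsto_rayLaplace_zero {ι : Type*} {l : Filter ι} {u : ι → ℂ}
    (hC : ∀ ξ : ℝ, 0 < ξ → ‖f (ξ * w)‖ ≤ C) (hu : Tendsto (fun i => (u i * w).re) l atTop) :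
    Tendsto (fun i => rayLaplace f w (u i)) l (𝓝 0) := by
  refine squeeze_zero_norm' ?_ (hu.const_div_atTop (‖w‖ * C))
  filter_upwards [hu.eventually_gt_atTop 0] with i hi
  exact norm_rayLaplace_le hi hC

theorem rayLaplace_congr (h : ∀ ξ : ℝ, 0 < ξ → f (ξ * w) = g (ξ * w)) :
    rayLaplace f w z = rayLaplace g w z := by
  rw [rayLaplace, rayLaplace]
  congr 1
  exact setIntegral_congr_fun measurableSet_Ioi fun ξ hξ => by simp only [h ξ hξ]

theorem rayLaplace_sub_rayLaplace_add (a : ℂ)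
    (hz : IntegrableOn (fun ξ : ℝ => exp (-z * (ξ * w)) * f (ξ * w)) (Set.Ioi 0))
    (hza : IntegrableOn (fun ξ : ℝ => exp (-(z + a) * (ξ * w)) * f (ξ * w)) (Set.Ioi 0)) :
    rayLaplace f w z - rayLaplace f w (z + a) =
      rayLaplace (fun ζ => f ζ * (1 - exp (-a * ζ))) w z := by
  rw [rayLaplace, rayLaplace, rayLaplace, ← mul_sub, ← integral_sub hz hza]
  congr 2 with ξ
  rw [neg_add, add_mul, exp_add]
  ring

theorem re_add_ofReal_mul_pos (hw : 0 ≤ w.re) (hz : 0 < (z * w).re) {t : ℝ} (ht : 0 ≤ t) :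
    0 < ((z + t) * w).re := by
  rw [add_mul, add_re, re_ofReal_mul]
  positivity

theorem integrable_uncurry_exp_neg_add_mul {μ : Measure ℝ} [SFinite μ] {k : ℝ → ℂ}
    (hw : 0 ≤ w.re) (hz : 0 < (z * w).re) (hμ : ∀ᵐ t ∂μ, 0 ≤ t) (hk : Integrable k μ) :
    Integrable (Function.uncurry fun ξ t : ℝ => exp (-(z + t) * (ξ * w)) * k t)
      ((volume.restrict (Set.Ioi 0)).prod μ) := by
  refine ((integrableOn_exp_neg_mul_ofReal_mul hz).mul_prod hk).mono ?_ ?_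
  · exact (Continuous.aestronglyMeasurable (by fun_prop)).mul hk.aestronglyMeasurable.comp_snd
  · filter_upwards [Measure.quasiMeasurePreserving_fst.ae (ae_restrict_mem measurableSet_Ioi),
      Measure.quasiMeasurePreserving_snd.ae hμ] with ⟨ξ, t⟩ hξ ht
    have hre : (z * w).re ≤ ((z + t) * w).re := by
      rw [add_mul, add_re, re_ofReal_mul]
      exact le_add_of_nonneg_right (mul_nonneg ht hw)
    simp only [Function.uncurry_apply_pair, norm_mul, norm_exp_neg_mul_ofReal_mul]
    gcongr
    exact le_of_lt hξ

theorem rayLaplace_integral_mul_exp_neg {μ : Measure ℝ} [SFinite μ] {k : ℝ → ℂ}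
    (hw : 0 ≤ w.re) (hz : 0 < (z * w).re) (hμ : ∀ᵐ t ∂μ, 0 ≤ t) (hk : Integrable k μ) :
    rayLaplace (fun ζ => ∫ t, k t * exp (-t * ζ) ∂μ) w z = ∫ t, k t / (z + t) ∂μ := by
  have hmul : ∀ ξ : ℝ, exp (-z * (ξ * w)) * ∫ t, k t * exp (-t * (ξ * w)) ∂μ =
      ∫ t, exp (-(z + t) * (ξ * w)) * k t ∂μ := fun ξ => by
    rw [← integral_const_mul]
    congr 1 with t
    rw [neg_add, add_mul, exp_add]
    ring
  simp_rw [rayLaplace, hmul]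
  rw [integral_integral_swap (integrable_uncurry_exp_neg_add_mul hw hz hμ hk), ← integral_const_mul]
  refine integral_congr_ae (hμ.mono fun t ht => ?_)
  have hre := re_add_ofReal_mul_pos hw hz ht
  have hne : (z + t) * w ≠ 0 := fun h => by simp [h] at hre
  have hexp : ∫ ξ in Set.Ioi (0 : ℝ), exp (-(z + t) * (ξ * w)) = 1 / ((z + t) * w) := by
    rw [← neg_div_neg_eq, ← exp_zero, ← mul_zero (-((z + t) * w)), ← ofReal_zero,
      ← integral_exp_mul_complex_Ioi (by simpa only [neg_re, neg_lt_zero] using hre)]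
    congr 1 with ξ
    ring_nf
  have := left_ne_zero_of_mul hne
  have := right_ne_zero_of_mul hne
  simp only [integral_mul_const, hexp]
  field_simp

end RayLaplace

section SawtoothLaplace

variable {ζ : ℂ}

/-- The Laplace transform of `1/2 - t` on `[0, 1]`, one period of the sawtooth function. It is the
entire function `μ̂(ζ) (1 - e^{-ζ})`. -/
noncomputable def sawtoothLaplace (ζ : ℂ) : ℂ :=
  ∫ t in (0 : ℝ)..1, (1 / 2 - t) * exp (-t * ζ)

theorem sawtoothLaplace_eq (hζ : ζ ≠ 0) :
    sawtoothLaplace ζ = (1 + exp (-ζ)) / (2 * ζ) - (1 - exp (-ζ)) / ζ ^ 2 := by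
  have hderiv (t : ℝ) : HasDerivAt
      (fun t : ℝ => exp (-t * ζ) * ((t - 1 / 2) / ζ + 1 / ζ ^ 2))
      ((1 / 2 - t) * exp (-t * ζ)) t := by
    have hid : HasDerivAt (fun t : ℝ => (t : ℂ)) 1 t := ofRealCLM.hasDerivAt
    refine ((hid.fun_neg.mul_const ζ).cexp.mul
      (((hid.sub_const (1 / 2)).div_const ζ).add_const (1 / ζ ^ 2))).congr_deriv ?_
    field_simp
    ring
  rw [sawtoothLaplace, intervalIntegral.integral_eq_sub_of_hasDerivAt (fun t _ => hderiv t)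
    ((by fun_prop : Continuous _).intervalIntegrable _ _)]
  simp only [ofReal_zero, ofReal_one, neg_zero, zero_mul, neg_mul, one_mul, exp_zero]
  field_simp
  ring

theorem norm_half_sub_ofReal_le {t : ℝ} (ht : t ∈ Set.Icc (0 : ℝ) 1) :
    ‖(1 / 2 - t : ℂ)‖ ≤ 1 / 2 := by
  rw [show (1 / 2 - t : ℂ) = ((1 / 2 - t : ℝ) : ℂ) by push_cast; rfl, norm_real,
    Real.norm_eq_abs, abs_le]
  constructor <;> linarith [ht.1, ht.2]

theorem norm_sawtoothLaplace_le_half (hζ : 0 ≤ ζ.re) : ‖sawtoothLaplace ζ‖ ≤ 1 / 2 := by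
  have hbound : ∀ t ∈ Set.uIoc (0 : ℝ) 1, ‖(1 / 2 - t) * exp (-t * ζ)‖ ≤ 1 / 2 := fun t ht => by
    rw [Set.uIoc_of_le zero_le_one] at ht
    have hexp : ‖exp (-t * ζ)‖ ≤ 1 := by
      rw [norm_exp, Real.exp_le_one_iff, neg_mul, neg_re, re_ofReal_mul, neg_nonpos]
      exact mul_nonneg ht.1.le hζ
    rw [norm_mul]
    exact (mul_le_of_le_one_right (norm_nonneg _) hexp).trans
      (norm_half_sub_ofReal_le (Set.Ioc_subset_Icc_self ht))
  simpa only [sawtoothLaplace, sub_zero, abs_one, mul_one] using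
    intervalIntegral.norm_integral_le_of_norm_le_const hbound

theorem norm_exp_sub_one_le_of_re_nonpos (hζ : ζ.re ≤ 0) : ‖exp ζ - 1‖ ≤ ‖ζ‖ := by
  simpa only [exp_zero, sub_zero, one_mul] using
    (convex_halfSpace_re_le 0).norm_image_sub_le_of_norm_hasDerivWithin_le (C := 1) (x := 0)
      (fun u _ => (hasDerivAt_exp u).hasDerivWithinAt)
      (fun u hu => by rw [norm_exp]; exact Real.exp_le_one_iff.mpr hu) (by simp) hζ

theorem sawtoothLaplace_eq_integral_exp_sub_one (ζ : ℂ) :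
    sawtoothLaplace ζ = ∫ t in (0 : ℝ)..1, (1 / 2 - t) * (exp (-t * ζ) - 1) := by
  have hzero : ∫ t in (0 : ℝ)..1, (1 / 2 - t : ℂ) = 0 := by
    rw [intervalIntegral.integral_sub intervalIntegrable_const
      (continuous_ofReal.intervalIntegrable _ _), intervalIntegral.integral_ofReal]
    simp
  simp_rw [mul_sub, mul_one]
  rw [intervalIntegral.integral_sub ((by fun_prop : Continuous _).intervalIntegrable _ _)
    ((by fun_prop : Continuous _).intervalIntegrable _ _), hzero, sub_zero, sawtoothLaplace]

theorem norm_sawtoothLaplace_le_norm_half (hζ : 0 ≤ ζ.re) : ‖sawtoothLaplace ζ‖ ≤ ‖ζ‖ / 2 := by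
  have hbound : ∀ t ∈ Set.uIoc (0 : ℝ) 1,
      ‖(1 / 2 - t) * (exp (-t * ζ) - 1)‖ ≤ 1 / 2 * ‖ζ‖ := fun t ht => by
    rw [Set.uIoc_of_le zero_le_one] at ht
    have hre : (-t * ζ).re ≤ 0 := by
      rw [neg_mul, neg_re, re_ofReal_mul, neg_nonpos]
      exact mul_nonneg ht.1.le hζ
    have hexp : ‖exp (-t * ζ) - 1‖ ≤ ‖ζ‖ := calc
      ‖exp (-t * ζ) - 1‖ ≤ ‖-t * ζ‖ := norm_exp_sub_one_le_of_re_nonpos hre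
      _ = t * ‖ζ‖ := by rw [norm_mul, norm_neg, norm_real, Real.norm_of_nonneg ht.1.le]
      _ ≤ ‖ζ‖ := mul_le_of_le_one_left (norm_nonneg _) ht.2
    rw [norm_mul]
    gcongr
    exact norm_half_sub_ofReal_le (Set.Ioc_subset_Icc_self ht)
  rw [sawtoothLaplace_eq_integral_exp_sub_one]
  simpa only [sub_zero, abs_one, mul_one, one_div_mul_eq_div] using
    intervalIntegral.norm_integral_le_of_norm_le_const hbound

end SawtoothLaplace

section MuHat

variable {ζ w z : ℂ}

theorem muHat_mul_one_sub_exp_neg (hζ : ζ ≠ 0) (hexp : exp ζ ≠ 1) :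
    muHat ζ * (1 - exp (-ζ)) = sawtoothLaplace ζ := by
  have hsub : exp ζ - 1 ≠ 0 := sub_ne_zero.mpr hexp
  have hexp0 : exp ζ ≠ 0 := exp_ne_zero ζ
  rw [sawtoothLaplace_eq hζ, muHat, exp_neg, zpow_neg, zpow_ofNat]
  field_simp

theorem exp_ne_one_of_re_ne_zero (hζ : ζ.re ≠ 0) : exp ζ ≠ 1 := fun h => hζ <| by
  rw [← Real.exp_eq_one_iff, ← norm_exp, h, norm_one]

theorem muHat_mul_one_sub_exp_neg_of_re_pos (hζ : 0 < ζ.re) :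
    muHat ζ * (1 - exp (-ζ)) = sawtoothLaplace ζ :=
  muHat_mul_one_sub_exp_neg (fun h => hζ.ne' (by rw [h, zero_re]))
    (exp_ne_one_of_re_ne_zero hζ.ne')

theorem re_le_one_add_re_mul_norm_one_sub_exp_neg (hζ : -1 ≤ ζ.re) :
    ζ.re ≤ (1 + ζ.re) * ‖1 - exp (-ζ)‖ := by
  have hnorm : 1 - Real.exp (-ζ.re) ≤ ‖1 - exp (-ζ)‖ := by
    simpa only [norm_one, norm_exp, neg_re] using norm_sub_norm_le 1 (exp (-ζ))
  have hexp : (1 + ζ.re) * Real.exp (-ζ.re) ≤ 1 := by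
    rw [Real.exp_neg, ← div_eq_mul_inv, div_le_one (Real.exp_pos _), add_comm]
    exact Real.add_one_le_exp _
  calc ζ.re ≤ (1 + ζ.re) * (1 - Real.exp (-ζ.re)) := by linarith
    _ ≤ (1 + ζ.re) * ‖1 - exp (-ζ)‖ := mul_le_mul_of_nonneg_left hnorm (by linarith)

theorem norm_muHat_le (hζ : 0 < ζ.re) : ‖muHat ζ‖ ≤ (‖ζ‖ / ζ.re + 1) / 2 := by
  have hmul : ‖muHat ζ‖ * ζ.re ≤ (‖ζ‖ + ζ.re) / 2 := calc
    ‖muHat ζ‖ * ζ.re ≤ ‖muHat ζ‖ * ((1 + ζ.re) * ‖1 - exp (-ζ)‖) := by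
      gcongr
      exact re_le_one_add_re_mul_norm_one_sub_exp_neg (by linarith)
    _ = ‖sawtoothLaplace ζ‖ + ζ.re * ‖sawtoothLaplace ζ‖ := by
      rw [← muHat_mul_one_sub_exp_neg_of_re_pos hζ, norm_mul]
      ring
    _ ≤ ‖ζ‖ / 2 + ζ.re * (1 / 2) := by
      gcongr
      · exact norm_sawtoothLaplace_le_norm_half hζ.le
      · exact norm_sawtoothLaplace_le_half hζ.le
    _ = (‖ζ‖ + ζ.re) / 2 := by ring
  calc ‖muHat ζ‖ ≤ (‖ζ‖ + ζ.re) / 2 / ζ.re := (le_div_iff₀ hζ).mpr hmul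
    _ = (‖ζ‖ / ζ.re + 1) / 2 := by field_simp

theorem norm_muHat_ofReal_mul_le (hw : 0 < w.re) {ξ : ℝ} (hξ : 0 < ξ) :
    ‖muHat (ξ * w)‖ ≤ (‖w‖ / w.re + 1) / 2 := by
  have hre : 0 < (ξ * w).re := by
    rw [re_ofReal_mul]
    positivity
  simpa only [re_ofReal_mul, norm_mul, norm_real, Real.norm_of_nonneg hξ.le,
    mul_div_mul_left _ _ hξ.ne'] using norm_muHat_le hre

theorem measurable_muHat : Measurable muHat := by
  unfold muHat
  simp only [zpow_neg, zpow_ofNat]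
  fun_prop

theorem integrableOn_exp_mul_muHat (hw : 0 < w.re) (hz : 0 < (z * w).re) :
    IntegrableOn (fun ξ : ℝ => exp (-z * (ξ * w)) * muHat (ξ * w)) (Set.Ioi 0) :=
  integrableOn_exp_mul_of_bounded_on_ray hz
    (measurable_muHat.comp (by fun_prop)).aestronglyMeasurable
    fun _ => norm_muHat_ofReal_mul_le hw

theorem mem_slitPlane_of_re_mul_pos (hw : 0 ≤ w.re) (hz : 0 < (z * w).re) : z ∈ slitPlane := by
  rw [mem_slitPlane_iff]
  by_contra! h
  rw [mul_re, h.2, zero_mul, sub_zero] at hz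
  exact hz.not_ge (mul_nonpos_of_nonpos_of_nonneg h.1 hw)

theorem add_ofReal_mem_slitPlane (hz : z ∈ slitPlane) {t : ℝ} (ht : 0 ≤ t) :
    z + t ∈ slitPlane := by
  simp only [mem_slitPlane_iff, add_re, add_im, ofReal_re, ofReal_im, add_zero] at hz ⊢
  exact hz.imp_left fun h => by positivity

theorem integral_half_sub_div_add (hz : z ∈ slitPlane) :
    ∫ t in (0 : ℝ)..1, (1 / 2 - t) / (z + t) = (z + 1 / 2) * (log (z + 1) - log z) - 1 := by
  have hmem : ∀ t ∈ Set.uIcc (0 : ℝ) 1, z + t ∈ slitPlane := fun t ht => by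
    rw [Set.uIcc_of_le zero_le_one] at ht
    exact add_ofReal_mem_slitPlane hz ht.1
  have hderiv : ∀ t ∈ Set.uIcc (0 : ℝ) 1, HasDerivAt
      (fun t : ℝ => (z + 1 / 2) * log (z + t) - t) ((1 / 2 - t) / (z + t)) t := fun t ht => by
    have hid : HasDerivAt (fun t : ℝ => (t : ℂ)) 1 t := ofRealCLM.hasDerivAt
    have hne := slitPlane_ne_zero (hmem t ht)
    refine ((((hid.const_add z).clog_real (hmem t ht)).const_mul (z + 1 / 2)).sub
      hid).congr_deriv ?_
    field_simp
    ring
  have hcont : ContinuousOn (fun t : ℝ => (1 / 2 - t) / (z + t)) (Set.uIcc 0 1) :=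
    .div (by fun_prop) (by fun_prop) fun t ht => slitPlane_ne_zero (hmem t ht)
  rw [intervalIntegral.integral_eq_sub_of_hasDerivAt hderiv hcont.intervalIntegrable, ofReal_one,
    ofReal_zero, add_zero]
  ring

theorem rayLaplace_sawtoothLaplace (hw : 0 ≤ w.re) (hz : 0 < (z * w).re) :
    rayLaplace sawtoothLaplace w z = (z + 1 / 2) * (log (z + 1) - log z) - 1 := by
  have hIoc : ∀ᵐ t : ℝ ∂volume.restrict (Set.Ioc 0 1), 0 ≤ t :=
    ae_restrict_of_forall_mem measurableSet_Ioc fun t ht => ht.1.le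
  have hint : IntegrableOn (fun t : ℝ => (1 / 2 - t : ℂ)) (Set.Ioc 0 1) :=
    (by fun_prop : Continuous _).integrableOn_Ioc
  have hStieltjes := rayLaplace_integral_mul_exp_neg hw hz hIoc hint
  simp only [← intervalIntegral.integral_of_le zero_le_one] at hStieltjes
  exact hStieltjes.trans (integral_half_sub_div_add (mem_slitPlane_of_re_mul_pos hw hz))

theorem rayLaplace_muHat_sub_rayLaplace_muHat_add_one (hw : 0 < w.re) (hz : 0 < (z * w).re) :
    rayLaplace muHat w z - rayLaplace muHat w (z + 1) =
      (z + 1 / 2) * (log (z + 1) - log z) - 1 := by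
  have hz1 : 0 < ((z + 1) * w).re := by
    simpa only [ofReal_one] using re_add_ofReal_mul_pos hw.le hz zero_le_one
  rw [rayLaplace_sub_rayLaplace_add 1 (integrableOn_exp_mul_muHat hw hz)
    (integrableOn_exp_mul_muHat hw hz1), ← rayLaplace_sawtoothLaplace hw.le hz]
  refine rayLaplace_congr fun ξ hξ => ?_
  rw [neg_one_mul, muHat_mul_one_sub_exp_neg_of_re_pos]
  rw [re_ofReal_mul]
  positivity

end MuHat

section Stirling

/-- The leading factor `√(2π) exp((z - 1/2) log z - z)` of Stirling's formula for `Γ(z)`. -/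
noncomputable def stirlingApprox (z : ℂ) : ℂ :=
  (Real.sqrt (2 * Real.pi) : ℂ) * exp ((z - 1 / 2) * log z - z)

theorem stirlingApprox_add_one {z : ℂ} (hz : z ≠ 0) :
    stirlingApprox (z + 1) =
      z * stirlingApprox z * exp ((z + 1 / 2) * (log (z + 1) - log z) - 1) := by
  have hexp : exp ((z + 1 - 1 / 2) * log (z + 1) - (z + 1)) =
      exp (log z) * exp ((z - 1 / 2) * log z - z) *
        exp ((z + 1 / 2) * (log (z + 1) - log z) - 1) := by
    rw [← exp_add, ← exp_add]
    congr 1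
    ring
  rw [stirlingApprox, stirlingApprox, hexp, exp_log hz]
  ring

theorem stirlingApprox_ne_zero (z : ℂ) : stirlingApprox z ≠ 0 :=
  mul_ne_zero (ofReal_ne_zero.mpr (by positivity)) (exp_ne_zero _)

theorem tendsto_natCast_mul_stirlingApprox_div_factorial :
    Tendsto (fun n : ℕ => n * stirlingApprox n / (n ! : ℂ)) atTop (𝓝 1) := by
  have hpi : Real.sqrt Real.pi ≠ 0 := by positivity
  have hreal : Tendsto (fun n => Real.sqrt Real.pi / Stirling.stirlingSeq n) atTop (𝓝 1) :=
    div_self hpi ▸ tendsto_const_nhds.div Stirling.tendsto_stirlingSeq_sqrt_pi hpi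
  refine (ofReal_one ▸ hreal.ofReal).congr' ?_
  filter_upwards [eventually_gt_atTop 0] with n hn
  have hn_pos : (0 : ℝ) < n := by exact_mod_cast hn
  have hexp : Real.exp ((n - 1 / 2) * Real.log n - n) =
      n ^ n / (Real.sqrt n * Real.exp 1 ^ n) := by
    rw [sub_mul, Real.exp_sub, Real.exp_sub, ← Real.log_pow, Real.exp_log (by positivity),
      mul_comm (1 / 2), ← Real.rpow_def_of_pos hn_pos, ← Real.sqrt_eq_rpow, Real.exp_one_pow,
      div_div]
  have hratio : Real.sqrt Real.pi / Stirling.stirlingSeq n =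
      n * (Real.sqrt (2 * Real.pi) * Real.exp ((n - 1 / 2) * Real.log n - n)) / n ! := by
    rw [hexp, Stirling.stirlingSeq, Real.sqrt_mul zero_le_two, Real.sqrt_mul zero_le_two, div_pow]
    field_simp
    rw [Real.sq_sqrt hn_pos.le]
  rw [hratio, stirlingApprox, ← natCast_log]
  push_cast
  rfl

theorem tendsto_one_add_div_natCast (a : ℂ) :
    Tendsto (fun n : ℕ => 1 + a / n) atTop (𝓝 1) := by
  simpa only [add_zero] using (tendsto_const_div_atTop_nhds_zero_nat a).const_add 1

theorem tendsto_natCast_add_mul_log_one_add_div (a b : ℂ) :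
    Tendsto (fun n : ℕ => (n + a) * log (1 + b / n)) atTop (𝓝 b) := by
  have hmain : Tendsto (fun n : ℕ => n * log (1 + b / n)) atTop (𝓝 b) := by
    refine tendsto_nat_mul_log_one_add_of_tendsto (tendsto_const_nhds.congr' ?_)
    filter_upwards [eventually_ne_atTop 0] with n hn
    exact (mul_div_cancel₀ b (Nat.cast_ne_zero.mpr hn)).symm
  have hlog : Tendsto (fun n : ℕ => a * log (1 + b / n)) atTop (𝓝 0) := by
    simpa only [log_one, mul_zero] using
      ((tendsto_one_add_div_natCast b).clog one_mem_slitPlane).const_mul a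
  simpa only [add_mul, add_zero] using hmain.add hlog

theorem stirlingApprox_natCast_add {n : ℕ} {a : ℂ} (hn : n ≠ 0) (ha : 1 + a / n ≠ 0) :
    stirlingApprox (n + a) =
      n ^ a * stirlingApprox n * exp ((n + (a - 1 / 2)) * log (1 + a / n) - a) := by
  have hn0 : (n : ℂ) ≠ 0 := Nat.cast_ne_zero.mpr hn
  have hlog : log (n + a) = log n + log (1 + a / n) := by
    rw [← natCast_log, ← log_ofReal_mul (by positivity) ha, ofReal_natCast, mul_add, mul_one,
      mul_div_cancel₀ a hn0]
  rw [stirlingApprox, stirlingApprox, cpow_def_of_ne_zero hn0, hlog, mul_left_comm, mul_assoc,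
    ← exp_add, ← exp_add]
  congr 2
  ring

theorem tendsto_stirlingApprox_natCast_add_div (a : ℂ) :
    Tendsto (fun n : ℕ => stirlingApprox (n + a) / (n ^ a * stirlingApprox n)) atTop (𝓝 1) := by
  have hexp : Tendsto (fun n : ℕ => exp ((n + (a - 1 / 2)) * log (1 + a / n) - a)) atTop (𝓝 1) := by
    simpa only [sub_self, exp_zero] using
      ((tendsto_natCast_add_mul_log_one_add_div (a - 1 / 2) a).sub_const a).cexp
  refine hexp.congr' ?_
  filter_upwards [eventually_ne_atTop 0,
    (tendsto_one_add_div_natCast a).eventually_ne one_ne_zero] with n hn ha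
  have hpow : (n : ℂ) ^ a ≠ 0 := cpow_ne_zero_iff.mpr (.inl (Nat.cast_ne_zero.mpr hn))
  have hS := stirlingApprox_ne_zero n
  rw [stirlingApprox_natCast_add hn ha, mul_div_cancel_left₀ _ (mul_ne_zero hpow hS)]

theorem tendsto_stirlingApprox_div_cpow_mul_factorial (z : ℂ) :
    Tendsto (fun n : ℕ => stirlingApprox (z + (n + 1 : ℕ)) / (n ^ z * n !)) atTop (𝓝 1) := by
  have h := (tendsto_stirlingApprox_natCast_add_div (z + 1)).mul
    tendsto_natCast_mul_stirlingApprox_div_factorial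
  rw [mul_one] at h
  refine h.congr' ?_
  filter_upwards [eventually_ne_atTop 0] with n hn
  have hn0 : (n : ℂ) ≠ 0 := Nat.cast_ne_zero.mpr hn
  have hS := stirlingApprox_ne_zero n
  rw [cpow_add _ _ hn0, cpow_one, Nat.cast_succ, add_left_comm]
  field_simp

end Stirling

section Gamma

theorem eq_prod_range_mul_of_add_one_eq_mul {R : Type*} [CommSemiring R] {f : R → R} {z : R}
    (hf : ∀ n : ℕ, f (z + n + 1) = (z + n) * f (z + n)) (n : ℕ) :
    f (z + n) = (∏ j ∈ Finset.range n, (z + j)) * f z := by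
  induction n with
  | zero => simp
  | succ n ih =>
    rw [Nat.cast_succ, ← add_assoc, hf, ih, Finset.prod_range_succ]
    ring

theorem eq_Gamma_of_add_one_eq_mul_of_tendsto {f : ℂ → ℂ} {z : ℂ}
    (hf : ∀ n : ℕ, f (z + n + 1) = (z + n) * f (z + n))
    (hlim : Tendsto (fun n : ℕ => f (z + (n + 1 : ℕ)) / (n ^ z * n !)) atTop (𝓝 1)) :
    f z = Gamma z := by
  have hprod := (GammaSeq_tendsto_Gamma z).mul hlim
  rw [mul_one] at hprod
  refine tendsto_nhds_unique (tendsto_const_nhds.congr' ?_) hprod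
  filter_upwards [hlim.eventually_ne one_ne_zero] with n hn
  obtain ⟨hfn, hden⟩ := div_ne_zero_iff.mp hn
  rw [eq_prod_range_mul_of_add_one_eq_mul hf] at hfn ⊢
  have hprod_ne := left_ne_zero_of_mul hfn
  rw [GammaSeq, div_mul_div_comm, mul_left_comm, mul_div_mul_left _ _ hprod_ne,
    mul_div_cancel_left₀ _ hden]

theorem stirlingApprox_mul_exp_rayLaplace_add_one {w z : ℂ} (hw : 0 < w.re)
    (hz : 0 < (z * w).re) :
    stirlingApprox (z + 1) * exp (rayLaplace muHat w (z + 1)) =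
      z * (stirlingApprox z * exp (rayLaplace muHat w z)) := by
  have hz0 : z ≠ 0 := slitPlane_ne_zero (mem_slitPlane_of_re_mul_pos hw.le hz)
  rw [stirlingApprox_add_one hz0, ← rayLaplace_muHat_sub_rayLaplace_muHat_add_one hw hz,
    mul_assoc, ← exp_add, sub_add_cancel, mul_assoc]

theorem tendsto_rayLaplace_muHat_add_natCast {w : ℂ} (hw : 0 < w.re) (z : ℂ) :
    Tendsto (fun n : ℕ => rayLaplace muHat w (z + n)) atTop (𝓝 0) := by
  refine tendsto_rayLaplace_zero (fun _ => norm_muHat_ofReal_mul_le hw) ?_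
  simp_rw [add_mul, add_re, ← ofReal_natCast, re_ofReal_mul]
  exact tendsto_atTop_add_const_left _ _ (tendsto_natCast_atTop_atTop.atTop_mul_const hw)

theorem Gamma_eq_stirlingApprox_mul_exp_rayLaplace {w z : ℂ} (hw : 0 < w.re)
    (hz : 0 < (z * w).re) :
    Gamma z = stirlingApprox z * exp (rayLaplace muHat w z) := by
  have hzn (n : ℕ) : 0 < ((z + n) * w).re := by
    simpa only [ofReal_natCast] using re_add_ofReal_mul_pos hw.le hz n.cast_nonneg
  have hexp : Tendsto (fun n : ℕ => exp (rayLaplace muHat w (z + (n + 1 : ℕ)))) atTop (𝓝 1) := by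
    simpa only [Function.comp_apply, exp_zero] using
      ((tendsto_rayLaplace_muHat_add_natCast hw z).comp (tendsto_add_atTop_nat 1)).cexp
  refine (eq_Gamma_of_add_one_eq_mul_of_tendsto
    (f := fun u => stirlingApprox u * exp (rayLaplace muHat w u))
    (fun n => stirlingApprox_mul_exp_rayLaplace_add_one hw (hzn n)) ?_).symm
  simpa only [mul_div_right_comm, mul_one] using
    (tendsto_stirlingApprox_div_cpow_mul_factorial z).mul hexp

end Gamma

end

/-- Borel–Laplace summation of the Stirling series: for every direction
`θ ∈ (-π/2, π/2)` and every `z` with `Re(z e^{iθ}) > 0`, the Laplace integral of `μ̂`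
in the direction `θ` converges and
`Γ(z) = √(2π)·exp((z-1/2)·Log z − z)·exp(e^{iθ} ∫₀^∞ e^{-zξe^{iθ}} μ̂(ξe^{iθ}) dξ)`. -/
theorem stmt_7 (θ : ℝ) (hθ : θ ∈ Set.Ioo (-(Real.pi / 2)) (Real.pi / 2)) (z : ℂ)
    (hz : 0 < (z * Complex.exp ((θ : ℂ) * Complex.I)).re) :
    IntegrableOn
        (fun ξ : ℝ => Complex.exp (-z * ((ξ : ℂ) * Complex.exp ((θ : ℂ) * Complex.I))) *
          muHat ((ξ : ℂ) * Complex.exp ((θ : ℂ) * Complex.I)))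
        (Set.Ioi (0:ℝ)) ∧
      Complex.Gamma z = (Real.sqrt (2 * Real.pi) : ℂ) *
        Complex.exp ((z - 1 / 2) * Complex.log z - z) *
        Complex.exp (Complex.exp ((θ : ℂ) * Complex.I) *
          (∫ ξ in Set.Ioi (0:ℝ),
            Complex.exp (-z * ((ξ : ℂ) * Complex.exp ((θ : ℂ) * Complex.I))) *
              muHat ((ξ : ℂ) * Complex.exp ((θ : ℂ) * Complex.I)))) := by
  have hw : 0 < (Complex.exp ((θ : ℂ) * Complex.I)).re := by
    rw [Complex.exp_ofReal_mul_I_re]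
    exact Real.cos_pos_of_mem_Ioo hθ
  exact ⟨integrableOn_exp_mul_muHat hw hz, Gamma_eq_stirlingApprox_mul_exp_rayLaplace hw hz⟩
end

section
/- For θ ∈ (−π,π)∖{0} and z ∈ ℂ with Re(z·e^{iθ}) > 0, set I_θ(z) := e^{iθ}∫₀^{+∞} e^{−z·ξe^{iθ}}·(1 + ξe^{iθ})^{−1} dξ. Then for every θ⁺ ∈ (0, π), θ⁻ ∈ (−π, 0) and every z ∈ ℂ with Re z < 0, Re(z·e^{iθ⁺}) > 0 and Re(z·e^{iθ⁻}) > 0, one has I_{θ⁺}(z) − I_{θ⁻}(z) = 2πi·e^z. -/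
open MeasureTheory

/-!
Write `g(ζ) = f(ζ) / (ζ - a)` with `f` entire and `a < 0`; for the Euler series `f(ζ) = e^{-zζ}` and
`a = -1`. Removing the singularity at `a` gives a function `F` such that `F + f(a) log(ζ - a)` and
`F + f(a) log(a - ζ)` are both primitives of `g`, with opposite branch cuts. The first one is
defined along both rays and computes the two integrals. The second one is defined far out in the
half-plane of decay, which contains the chord joining `R e₁` to `R e₂`; since `g` is exponentially
small there, its increment along the chord vanishes as `R → ∞`. The two branches differ by `±πi`,
with opposite signs on the two rays, which leaves `2πi f(a)`.
-/

open Filter Topology Asymptotics Complex Set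

section DecayFilter

/-- The filter generated by the half-planes `{ζ | c ≤ Re (z ζ)}`, that is, `ζ → ∞` in the
directions in which `ζ ↦ e^{-zζ}` decays. -/
def decayFilter (z : ℂ) : Filter ℂ :=
  comap (fun ζ => (z * ζ).re) atTop

variable {z : ℂ}

lemma eventually_decayFilter_iff {p : ℂ → Prop} :
    (∀ᶠ ζ in decayFilter z, p ζ) ↔ ∃ c : ℝ, ∀ ζ, c ≤ (z * ζ).re → p ζ := by
  simp only [decayFilter, (atTop_basis.comap _).eventually_iff, true_and, mem_preimage, mem_Ici]

lemma decayFilter_le_cobounded (z : ℂ) : decayFilter z ≤ Bornology.cobounded ℂ := by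
  have hre : LipschitzWith _ fun ζ : ℂ => (z * ζ).re :=
    (reCLM.comp (ContinuousLinearMap.mul ℂ ℂ z |>.restrictScalars ℝ)).lipschitz
  exact (comap_mono (by simp)).trans hre.comap_cobounded_le

lemma tendsto_ofReal_mul_decayFilter {e : ℂ} (he : 0 < (z * e).re) :
    Tendsto (fun R : ℝ => (R : ℂ) * e) atTop (decayFilter z) := by
  refine tendsto_comap_iff.2 ((tendsto_id.atTop_mul_const he).congr fun R => ?_)
  simp only [Function.comp_apply, id, mul_left_comm z, re_ofReal_mul]

lemma eventually_sub_mem_slitPlane_decayFilter (hz : z.re < 0) (a : ℝ) :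
    ∀ᶠ ζ in decayFilter z, (a : ℂ) - ζ ∈ slitPlane := by
  refine eventually_decayFilter_iff.2 ⟨z.re * a + 1, fun ζ hζ => ?_⟩
  by_contra h
  simp only [mem_slitPlane_iff, sub_re, sub_im, ofReal_re, ofReal_im, not_or, not_lt, not_not,
    zero_sub, neg_eq_zero] at h
  rw [mul_re, h.2, mul_zero, sub_zero] at hζ
  nlinarith [h.1]

lemma convex_setOf_le_re_mul (z : ℂ) (c : ℝ) : Convex ℝ {ζ : ℂ | c ≤ (z * ζ).re} :=
  convex_halfSpace_ge (reLm.comp (LinearMap.mulLeft ℝ z)).isLinear c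

end DecayFilter

section RayIntegral

variable {E : Type*} [NormedAddCommGroup E] {z e : ℂ} {g G : ℂ → E}

lemma integrableOn_ray_of_isBigO_exp_neg (hcont : ContinuousOn (fun ξ : ℝ => g (ξ * e)) (Ici 0))
    (he : 0 < (z * e).re) (hg : g =O[decayFilter z] fun ζ => Real.exp (-(z * ζ).re)) :
    IntegrableOn (fun ξ : ℝ => g (ξ * e)) (Ioi 0) := by
  have hO : (fun ξ : ℝ => g (ξ * e)) =O[atTop] fun ξ : ℝ => Real.exp (-(z * e).re * ξ) := by
    refine (hg.comp_tendsto (tendsto_ofReal_mul_decayFilter he)).congr_right fun ξ => ?_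
    simp only [Function.comp_apply, mul_left_comm z, re_ofReal_mul]
    ring_nf
  refine IntegrableOn.mono_set (t := Ici 0) ?_ Ioi_subset_Ici_self
  exact (hcont.locallyIntegrableOn measurableSet_Ici).integrableOn_of_isBigO_atTop hO
    ⟨Ioi 0, Ioi_mem_atTop 0, exp_neg_integrableOn_Ioi 0 he⟩

variable [NormedSpace ℂ E]

/-- The contour integral `∫ g(ζ) dζ` along the ray from `0` in the direction `e`, parametrized by
`ζ = ξ e`. For `g(ζ) = e^{-zζ} φ(ζ)` and `e = e^{iθ}` this is the Laplace transform of `φ` in the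
direction `θ`. -/
noncomputable def rayIntegral (g : ℂ → E) (e : ℂ) : E :=
  e • ∫ ξ in Ioi (0 : ℝ), g (ξ * e)

lemma tendsto_primitive_ray [CompleteSpace E]
    (hG : ∀ ξ : ℝ, 0 ≤ ξ → HasDerivAt G (g (ξ * e)) (ξ * e))
    (hint : IntegrableOn (fun ξ : ℝ => g (ξ * e)) (Ioi 0)) :
    Tendsto (fun R : ℝ => G (R * e)) atTop (𝓝 (rayIntegral g e + G 0)) := by
  have hderiv (ξ : ℝ) (hξ : 0 ≤ ξ) : HasDerivAt (fun ξ : ℝ => G (ξ * e)) (e • g (ξ * e)) ξ :=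
    (hG ξ hξ).scomp ξ (by simpa using (ofRealCLM.hasDerivAt (x := ξ)).mul_const e)
  have hlim := tendsto_limUnder_of_hasDerivAt_of_integrableOn_Ioi
    (fun ξ hξ => hderiv ξ (mem_Ioi.1 hξ).le) (hint.smul e)
  have hval := integral_Ioi_of_hasDerivAt_of_tendsto' hderiv (hint.smul e) hlim
  rw [integral_smul, ofReal_zero, zero_mul] at hval
  rwa [rayIntegral, hval, sub_add_cancel]

lemma tendsto_primitive_sub_of_isBigO_exp_neg {e₁ e₂ : ℂ}
    (h₁ : 0 < (z * e₁).re) (h₂ : 0 < (z * e₂).re)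
    (hG : ∀ᶠ ζ in decayFilter z, HasDerivAt G (g ζ) ζ)
    (hg : g =O[decayFilter z] fun ζ => Real.exp (-(z * ζ).re)) :
    Tendsto (fun R : ℝ => G (R * e₁) - G (R * e₂)) atTop (𝓝 0) := by
  obtain ⟨C, hC, hbound⟩ := hg.exists_pos
  obtain ⟨c, hc⟩ := eventually_decayFilter_iff.1 (hG.and hbound.bound)
  set m := min (z * e₁).re (z * e₂).re
  have hm : 0 < m := lt_min h₁ h₂
  have hlim : Tendsto (fun R : ℝ => C * Real.exp (-(m * R)) * ‖R * e₁ - R * e₂‖)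
      atTop (𝓝 0) := by
    have h := (tendsto_rpow_mul_exp_neg_mul_atTop_nhds_zero 1 m hm).const_mul (C * ‖e₁ - e₂‖)
    rw [mul_zero] at h
    refine h.congr' ?_
    filter_upwards [eventually_ge_atTop 0] with R hR
    rw [← mul_sub, norm_mul, norm_real, Real.norm_of_nonneg hR, Real.rpow_one, neg_mul]
    ring
  refine squeeze_zero_norm' ?_ hlim
  filter_upwards [eventually_ge_atTop 0, eventually_ge_atTop (c / m)] with R hR hRc
  have hcm : c ≤ m * R := by rwa [div_le_iff₀' hm] at hRc
  have hmem {e : ℂ} (he : m ≤ (z * e).re) : (R * e : ℂ) ∈ {ζ : ℂ | m * R ≤ (z * ζ).re} := by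
    rw [mem_ofPred_eq, mul_left_comm, re_ofReal_mul, mul_comm]
    gcongr
  refine (convex_setOf_le_re_mul z (m * R)).norm_image_sub_le_of_norm_hasDerivWithin_le
    (fun ζ hζ => (hc ζ (hcm.trans hζ)).1.hasDerivWithinAt) (fun ζ hζ => ?_)
    (hmem (min_le_right _ _)) (hmem (min_le_left _ _))
  calc ‖g ζ‖ ≤ C * ‖Real.exp (-(z * ζ).re)‖ := (hc ζ (hcm.trans hζ)).2
    _ ≤ C * Real.exp (-(m * R)) := by
      rw [Real.norm_of_nonneg (Real.exp_pos _).le]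
      gcongr
      exact hζ

end RayIntegral

section SimplePole

variable {E : Type*} [NormedAddCommGroup E] [NormedSpace ℂ E] {f : ℂ → E}

lemma log_sub_log_neg_of_im_pos {w : ℂ} (hw : 0 < w.im) : log w - log (-w) = Real.pi * I := by
  simp only [log, norm_neg, arg_neg_eq_arg_sub_pi_of_im_pos hw]
  push_cast
  ring

lemma log_sub_log_neg_of_im_neg {w : ℂ} (hw : w.im < 0) : log w - log (-w) = -(Real.pi * I) := by
  rw [← log_sub_log_neg_of_im_pos (w := -w) (by simpa using hw), neg_neg, neg_sub]

lemma exists_hasDerivAt_add_log_smul [CompleteSpace E] (hf : Differentiable ℂ f) (a : ℂ) :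
    ∃ F : ℂ → E,
      (∀ ζ, ζ - a ∈ slitPlane →
        HasDerivAt (fun w => F w + log (w - a) • f a) ((ζ - a)⁻¹ • f ζ) ζ) ∧
      ∀ ζ, a - ζ ∈ slitPlane →
        HasDerivAt (fun w => F w + log (a - w) • f a) ((ζ - a)⁻¹ • f ζ) ζ := by
  have hslope : Differentiable ℂ (dslope f a) :=
    differentiableOn_univ.1 ((differentiableOn_dslope univ_mem).2 hf.differentiableOn)
  obtain ⟨F, hF⟩ := hslope.isExactOn_univ
  have hadd {L : ℂ → ℂ} {ζ : ℂ} (hζ : ζ ≠ a) (hL : HasDerivAt L (ζ - a)⁻¹ ζ) :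
      HasDerivAt (fun w => F w + L w • f a) ((ζ - a)⁻¹ • f ζ) ζ := by
    refine ((hF ζ (mem_univ ζ)).add (hL.smul_const (f a))).congr_deriv ?_
    rw [dslope_of_ne f hζ, slope_def_module, ← smul_add, sub_add_cancel]
  refine ⟨F, fun ζ hζ => hadd (sub_ne_zero.1 (slitPlane_ne_zero hζ)) ?_,
    fun ζ hζ => hadd (sub_ne_zero.1 (slitPlane_ne_zero hζ)).symm ?_⟩
  · simpa using ((hasDerivAt_id ζ).sub_const a).clog hζ
  · refine (((hasDerivAt_id ζ).const_sub a).clog hζ).congr_deriv ?_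
    rw [id, neg_div, one_div, ← inv_neg, neg_sub]

lemma isBigO_inv_sub_smul_decayFilter (z a : ℂ) :
    (fun ζ => (ζ - a)⁻¹ • f ζ) =O[decayFilter z] f := by
  have hinv : Tendsto (fun ζ : ℂ => (ζ - a)⁻¹) (decayFilter z) (𝓝 0) :=
    tendsto_inv₀_cobounded.comp
      ((tendsto_sub_const_cobounded a).mono_left (decayFilter_le_cobounded z))
  simpa using (hinv.isBigO_one ℂ).smul (isBigO_refl f _)

lemma ofReal_mul_sub_mem_slitPlane {e : ℂ} (he : e.im ≠ 0) {a : ℝ} (ha : a < 0) (ξ : ℝ) :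
    ξ * e - a ∈ slitPlane := by
  rcases eq_or_ne ξ 0 with rfl | hξ
  · exact Or.inl (by simpa using ha)
  · exact Or.inr (by simp [hξ, he])

lemma integrableOn_ray_inv_sub_smul (hf : Continuous f) {z e : ℂ} {a : ℝ} (ha : a < 0)
    (him : e.im ≠ 0) (he : 0 < (z * e).re)
    (hdecay : f =O[decayFilter z] fun ζ => Real.exp (-(z * ζ).re)) :
    IntegrableOn (fun ξ : ℝ => (ξ * e - a)⁻¹ • f (ξ * e)) (Ioi 0) := by
  have hinv : Continuous fun ξ : ℝ => (ξ * e - a)⁻¹ :=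
    Continuous.inv₀ (by fun_prop) fun ξ => slitPlane_ne_zero (ofReal_mul_sub_mem_slitPlane him ha ξ)
  exact integrableOn_ray_of_isBigO_exp_neg (g := fun ζ => (ζ - a)⁻¹ • f ζ)
    (hinv.smul (by fun_prop)).continuousOn he ((isBigO_inv_sub_smul_decayFilter z a).trans hdecay)

theorem rayIntegral_sub_rayIntegral_eq_two_pi_I_smul [CompleteSpace E] (hf : Differentiable ℂ f)
    {z e₁ e₂ : ℂ} {a : ℝ} (hz : z.re < 0) (ha : a < 0)
    (hdecay : f =O[decayFilter z] fun ζ => Real.exp (-(z * ζ).re))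
    (him₁ : 0 < e₁.im) (him₂ : e₂.im < 0) (h₁ : 0 < (z * e₁).re) (h₂ : 0 < (z * e₂).re) :
    rayIntegral (fun ζ => (ζ - a)⁻¹ • f ζ) e₁ - rayIntegral (fun ζ => (ζ - a)⁻¹ • f ζ) e₂ =
      (2 * Real.pi * I) • f a := by
  obtain ⟨F, hF, hF_neg⟩ := exists_hasDerivAt_add_log_smul hf a
  have hray {e : ℂ} (him : e.im ≠ 0) (he : 0 < (z * e).re) :
      Tendsto (fun R : ℝ => F (R * e) + log (R * e - a) • f a) atTop
        (𝓝 (rayIntegral (fun ζ => (ζ - a)⁻¹ • f ζ) e + (F 0 + log (0 - a) • f a))) :=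
    tendsto_primitive_ray (g := fun ζ => (ζ - a)⁻¹ • f ζ)
      (fun ξ _ => hF _ (ofReal_mul_sub_mem_slitPlane him ha ξ))
      (integrableOn_ray_inv_sub_smul hf.continuous ha him he hdecay)
  have hchord := tendsto_primitive_sub_of_isBigO_exp_neg h₁ h₂
    ((eventually_sub_mem_slitPlane_decayFilter hz a).mono hF_neg)
    ((isBigO_inv_sub_smul_decayFilter z a).trans hdecay)
  have hbranch : Tendsto (fun R : ℝ => (F (R * e₁) + log (R * e₁ - a) • f a) -
      (F (R * e₂) + log (R * e₂ - a) • f a)) atTop (𝓝 ((2 * Real.pi * I) • f a)) := by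
    rw [← zero_add ((2 * Real.pi * I) • f a)]
    refine (hchord.add_const _).congr' ?_
    filter_upwards [eventually_gt_atTop 0] with R hR
    have hlog₁ := log_sub_log_neg_of_im_pos (w := R * e₁ - a) (by simpa using mul_pos hR him₁)
    have hlog₂ := log_sub_log_neg_of_im_neg (w := R * e₂ - a)
      (by simpa using mul_neg_of_pos_of_neg hR him₂)
    rw [neg_sub] at hlog₁ hlog₂
    rw [eq_add_of_sub_eq hlog₁, eq_add_of_sub_eq hlog₂]
    module
  have h := tendsto_nhds_unique ((hray him₁.ne' h₁).sub (hray him₂.ne h₂)) hbranch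
  rwa [add_sub_add_right_eq_sub] at h

end SimplePole

lemma isBigO_cexp_neg_mul_decayFilter (z : ℂ) :
    (fun ζ => exp (-z * ζ)) =O[decayFilter z] fun ζ => Real.exp (-(z * ζ).re) :=
  isBigO_of_le _ fun ζ => by
    rw [norm_exp, neg_mul, neg_re, Real.norm_of_nonneg (Real.exp_pos _).le]

/-- Stokes phenomenon for the Euler series: the two lateral Borel sums
`I_θ(z) = e^{iθ} ∫₀^∞ e^{−zξe^{iθ}}(1+ξe^{iθ})^{-1} dξ` (directions `θ⁺ ∈ (0,π)` and
`θ⁻ ∈ (−π,0)`) differ by `2πi e^z` on the left half-plane. -/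
theorem stmt_13 (θp θm : ℝ) (hθp : θp ∈ Set.Ioo 0 Real.pi)
    (hθm : θm ∈ Set.Ioo (-Real.pi) 0) (z : ℂ) (hre : z.re < 0)
    (hp : 0 < (z * Complex.exp ((θp : ℂ) * Complex.I)).re)
    (hm : 0 < (z * Complex.exp ((θm : ℂ) * Complex.I)).re) :
    Complex.exp ((θp : ℂ) * Complex.I) *
        (∫ ξ in Set.Ioi (0:ℝ),
          Complex.exp (-z * ((ξ : ℂ) * Complex.exp ((θp : ℂ) * Complex.I))) *
            (1 + (ξ : ℂ) * Complex.exp ((θp : ℂ) * Complex.I))⁻¹) -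
      Complex.exp ((θm : ℂ) * Complex.I) *
        (∫ ξ in Set.Ioi (0:ℝ),
          Complex.exp (-z * ((ξ : ℂ) * Complex.exp ((θm : ℂ) * Complex.I))) *
            (1 + (ξ : ℂ) * Complex.exp ((θm : ℂ) * Complex.I))⁻¹) =
      2 * (Real.pi : ℂ) * Complex.I * Complex.exp z := by
  have him₁ : 0 < (exp (θp * I)).im := by
    rw [exp_ofReal_mul_I_im]
    exact Real.sin_pos_of_mem_Ioo hθp
  have him₂ : (exp (θm * I)).im < 0 := by
    rw [exp_ofReal_mul_I_im]
    exact Real.sin_neg_of_neg_of_neg_pi_lt hθm.2 hθm.1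
  have hresidue := rayIntegral_sub_rayIntegral_eq_two_pi_I_smul (a := -1)
    (f := fun ζ => exp (-z * ζ)) (by fun_prop) hre neg_one_lt_zero
    (isBigO_cexp_neg_mul_decayFilter z) him₁ him₂ hp hm
  simpa [rayIntegral, mul_comm, add_comm] using hresidue
end
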